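/- arXiv:2505.23222 — 2 statements merged into one kernel-verified Lean document; each statement's English description precedes it below -/
import Mathlib

section
/- Energy dissipation identity for the nonlocal Allen–Cahn equation: the function t ↦ E^ε(t) is differentiable on (0,T) and satisfies, for every t ∈ (0,T), d/dt E^ε(t) = −ε ∫_Q (∂ₜφ(x,t))² dx. -/
open MeasureTheory Real Function
open scoped RealInnerProductSpace

noncomputable section

abbrev Euc (d : ℕ) := EuclideanSpace ℝ (Fin d)

/-- The double-well potential `W(s) = (1-s²)²/2`. -/
def W (s : ℝ) : ℝ := (1 - s ^ 2) ^ 2 / 2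

/-- Its derivative `W'(s) = -2s(1-s²)`. -/
def Wp (s : ℝ) : ℝ := -2 * s * (1 - s ^ 2)

/-- `k(s) = ∫₀ˢ √(2W(r)) dr`. -/
def kfun (s : ℝ) : ℝ := ∫ r in (0:ℝ)..s, Real.sqrt (2 * W r)

/-- The unit cell `Q = [0,1)^d`. -/
def Qcell (d : ℕ) : Set (Euc d) := {x | ∀ i, x i ∈ Set.Ico (0:ℝ) 1}

/-- The Laplacian (sum of second partial derivatives). -/
def lap {d : ℕ} (f : Euc d → ℝ) (x : Euc d) : ℝ :=
  ∑ i : Fin d, fderiv ℝ (fun y => fderiv ℝ f y (EuclideanSpace.single i 1)) x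
    (EuclideanSpace.single i 1)

/-- The total energy `E^ε(t) = E_S^ε(t) + E_P^ε(t)`. -/
def Eeps (d : ℕ) (ε α : ℝ) (φ : Euc d → ℝ → ℝ) (lam : ℝ → ℝ) (t : ℝ) : ℝ :=
  (∫ x in Qcell d, (ε * ‖gradient (fun y => φ y t) x‖ ^ 2 / 2 + W (φ x t) / ε)) +
    ε ^ α / 2 * lam t ^ 2

/-!
Along the flow, differentiating the three parts of the energy under the integral sign gives
`dE/dt = ∫ (ε ⟪∇φ, ∇∂ₜφ⟫ + W'(φ) ∂ₜφ / ε) + ε^α λ λ'`. Periodicity makes the boundary terms on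
opposite faces of the cell cancel, so the first term is `-ε ∫ ∂ₜφ Δφ`. The prefactors `ε^α` and
`ε^(-α)` of `E_P` and of `λ` cancel, and `k' = √(2W)`, so that `ε^α λ λ' = -λ ∫ √(2W(φ)) ∂ₜφ`. What
remains is the equation tested against `-∂ₜφ`.
-/

section BoundedDomain

variable {X : Type*} [MetricSpace X] [ProperSpace X] [MeasurableSpace X]
  [OpensMeasurableSpace X] {μ : Measure X} [IsFiniteMeasureOnCompacts μ]
  {E : Type*} [NormedAddCommGroup E] {s : Set X}

lemma integrableOn_of_continuous_of_isBounded {f : X → E} (hf : Continuous f)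
    (hs : Bornology.IsBounded s) : IntegrableOn f s μ :=
  (hf.continuousOn.integrableOn_compact hs.isCompact_closure).mono_set subset_closure

lemma hasDerivAt_setIntegral_of_isBounded [NormedSpace ℝ E] (hs : Bornology.IsBounded s)
    (hsm : MeasurableSet s) {G G' : X → ℝ → E} (hG : ∀ t, Continuous fun x => G x t)
    (hG' : Continuous (uncurry G')) (h : ∀ x t, HasDerivAt (G x) (G' x t) t) (t : ℝ) :
    HasDerivAt (fun t => ∫ x in s, G x t ∂μ) (∫ x in s, G' x t ∂μ) t := by
  obtain ⟨C, hC⟩ := (hs.isCompact_closure.prod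
    (isCompact_closedBall t 1)).exists_bound_of_continuousOn hG'.continuousOn
  have hbound : ∀ᵐ x ∂μ.restrict s, ∀ r ∈ Metric.closedBall t 1, ‖G' x r‖ ≤ C := by
    filter_upwards [ae_restrict_mem hsm] with x hx r hr
    exact hC (x, r) ⟨subset_closure hx, hr⟩
  exact (hasDerivAt_integral_of_dominated_loc_of_deriv_le (F := fun t x => G x t)
    (Metric.closedBall_mem_nhds t one_pos)
    (.of_forall fun r =>
      (integrableOn_of_continuous_of_isBounded (hG r) hs).aestronglyMeasurable)
    (integrableOn_of_continuous_of_isBounded (hG t) hs)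
    (integrableOn_of_continuous_of_isBounded
      (hG'.comp (Continuous.prodMk_left t)) hs).aestronglyMeasurable
    hbound (integrableOn_of_continuous_of_isBounded continuous_const hs)
    (.of_forall fun x r _ => h x r)).2

end BoundedDomain

section Slices

variable {E F : Type*} [NormedAddCommGroup E] [NormedSpace ℝ E] [NormedAddCommGroup F]
  [NormedSpace ℝ F] {φ : E → ℝ → F}

lemma contDiff_slice {n : WithTop ℕ∞} (hφ : ContDiff ℝ n (uncurry φ)) (t : ℝ) :
    ContDiff ℝ n fun x => φ x t :=
  hφ.comp (contDiff_prodMk_left t)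

lemma hasFDerivAt_slice {x : E} {t : ℝ} (hφ : DifferentiableAt ℝ (uncurry φ) (x, t)) :
    HasFDerivAt (fun y => φ y t) (fderiv ℝ (uncurry φ) (x, t) ∘L .inl ℝ E ℝ) x :=
  HasFDerivAt.comp (g := uncurry φ) (f := fun y => (y, t)) x hφ.hasFDerivAt
    (hasFDerivAt_prodMk_left x t)

lemma hasDerivAt_slice {x : E} {t : ℝ} (hφ : DifferentiableAt ℝ (uncurry φ) (x, t)) :
    HasDerivAt (φ x) (fderiv ℝ (uncurry φ) (x, t) (0, 1)) t :=
  hφ.hasFDerivAt.comp_hasDerivAt t ((hasDerivAt_const t x).prodMk (hasDerivAt_id t))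

lemma contDiff_uncurry_deriv {m n : WithTop ℕ∞} (hφ : ContDiff ℝ n (uncurry φ))
    (hmn : m + 1 ≤ n) : ContDiff ℝ m (uncurry fun x t => deriv (φ x) t) := by
  have hφ' : ContDiff ℝ n (uncurry fun (p : E × ℝ) s => φ p.1 s) :=
    hφ.comp (contDiff_fst.fst.prodMk contDiff_snd)
  exact hφ'.fderiv_apply contDiff_snd contDiff_const hmn

lemma hasDerivAt_fderiv_slice (hφ : ContDiff ℝ 2 (uncurry φ)) (x v : E) (t : ℝ) :
    HasDerivAt (fun s => fderiv ℝ (fun y => φ y s) x v)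
      (fderiv ℝ (fun y => deriv (φ y) t) x v) t := by
  have hφ₁ : Differentiable ℝ (uncurry φ) := hφ.differentiable two_ne_zero
  have hφ₂ : Differentiable ℝ (fderiv ℝ (uncurry φ)) :=
    (hφ.fderiv_right (m := 1) (by norm_num)).differentiable one_ne_zero
  have hsymm : IsSymmSndFDerivAt ℝ (uncurry φ) (x, t) :=
    hφ.contDiffAt.isSymmSndFDerivAt (by simp)
  have hspace : (fun s => fderiv ℝ (fun y => φ y s) x v) =
      fun s => fderiv ℝ (uncurry φ) (x, s) (v, 0) := by
    funext s
    simp [(hasFDerivAt_slice (hφ₁ (x, s))).fderiv]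
  have htime : (fun y => deriv (φ y) t) = fun y => fderiv ℝ (uncurry φ) (y, t) (0, 1) :=
    funext fun y => (hasDerivAt_slice (hφ₁ (y, t))).deriv
  have htime' : fderiv ℝ (fun y => fderiv ℝ (uncurry φ) (y, t) (0, 1)) x v =
      fderiv ℝ (fderiv ℝ (uncurry φ)) (x, t) (v, 0) (0, 1) := by
    have h := (hasFDerivAt_slice (φ := curry (fderiv ℝ (uncurry φ))) (hφ₂ (x, t))).clm_apply
      (hasFDerivAt_const ((0 : E), (1 : ℝ)) x)
    simpa using congrArg (· v) h.fderiv
  rw [hspace, htime, htime', hsymm]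
  simpa using (hasDerivAt_slice (φ := curry (fderiv ℝ (uncurry φ))) (hφ₂ (x, t))).clm_apply
    (hasDerivAt_const t (v, (0 : ℝ)))

lemma hasDerivAt_setIntegral_comp [ProperSpace E] [MeasurableSpace E] [OpensMeasurableSpace E]
    {μ : Measure E} [IsFiniteMeasureOnCompacts μ] {s : Set E} (hs : Bornology.IsBounded s)
    (hsm : MeasurableSet s) {φ : E → ℝ → ℝ} (hφ : ContDiff ℝ 1 (uncurry φ)) {V V' : ℝ → ℝ}
    (hV : ∀ r, HasDerivAt V (V' r) r) (hV' : Continuous V') (t : ℝ) :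
    HasDerivAt (fun r => ∫ x in s, V (φ x r) ∂μ)
      (∫ x in s, V' (φ x t) * deriv (φ x) t ∂μ) t := by
  have hVcont : Continuous V := continuous_iff_continuousAt.2 fun r => (hV r).continuousAt
  have hφt : Continuous (uncurry fun x r => deriv (φ x) r) :=
    (contDiff_uncurry_deriv (m := 0) hφ (zero_add 1).le).continuous
  exact hasDerivAt_setIntegral_of_isBounded (G' := fun x r => V' (φ x r) * deriv (φ x) r) hs hsm
    (fun r => hVcont.comp (contDiff_slice hφ r).continuous)
    ((hV'.comp hφ.continuous).mul hφt)
    (fun x r => (hV (φ x r)).comp r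
      (hasDerivAt_slice (hφ.differentiable one_ne_zero (x, r))).differentiableAt.hasDerivAt) t

lemma contDiff_fderiv_apply {f : E → F} (hf : ContDiff ℝ 2 f) (v : E) :
    ContDiff ℝ 1 fun y => fderiv ℝ f y v :=
  (hf.fderiv_right one_add_one_eq_two.le).clm_apply contDiff_const

lemma periodic_fderiv {f : E → F} {c : E} (hf : Periodic f c) : Periodic (fderiv ℝ f) c :=
  fun x => by rw [← fderiv_comp_add_right, funext hf]

end Slices

section Gradient

variable {H : Type*} [NormedAddCommGroup H] [InnerProductSpace ℝ H] [CompleteSpace H]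

lemma continuous_gradient {f : H → ℝ} (hf : ContDiff ℝ 1 f) : Continuous (gradient f) :=
  (InnerProductSpace.toDual ℝ H).symm.continuous.comp (hf.continuous_fderiv one_ne_zero)

lemma continuous_uncurry_gradient {φ : H → ℝ → ℝ} (hφ : ContDiff ℝ 1 (uncurry φ)) :
    Continuous (uncurry fun x t => gradient (fun y => φ y t) x) := by
  have hφ' : ContDiff ℝ 1 (uncurry fun (p : H × ℝ) y => φ y p.2) :=
    hφ.comp (contDiff_snd.prodMk contDiff_fst.snd)
  exact (InnerProductSpace.toDual ℝ H).symm.continuous.comp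
    (hφ'.fderiv (n := 0) contDiff_fst (by simp)).continuous

variable {ι : Type*} [Fintype ι]

lemma inner_gradient_gradient [DecidableEq ι]
    (f g : EuclideanSpace ℝ ι → ℝ) (x : EuclideanSpace ℝ ι) :
    ⟪gradient f x, gradient g x⟫ =
      ∑ i, fderiv ℝ f x (EuclideanSpace.single i 1) *
        fderiv ℝ g x (EuclideanSpace.single i 1) := by
  rw [← (EuclideanSpace.basisFun ι ℝ).sum_inner_mul_inner]
  simp [inner_gradient_left, inner_gradient_right]

lemma hasDerivAt_norm_gradient_sq {φ : EuclideanSpace ℝ ι → ℝ → ℝ}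
    (hφ : ContDiff ℝ 2 (uncurry φ)) (x : EuclideanSpace ℝ ι) (t : ℝ) :
    HasDerivAt (fun s => ‖gradient (fun y => φ y s) x‖ ^ 2)
      (2 * ⟪gradient (fun y => deriv (φ y) t) x, gradient (fun y => φ y t) x⟫) t := by
  classical
  simp only [← real_inner_self_eq_norm_sq, inner_gradient_gradient, Finset.mul_sum]
  refine HasDerivAt.fun_sum fun i _ => ?_
  have h := hasDerivAt_fderiv_slice hφ x (EuclideanSpace.single i 1) t
  exact (h.mul h).congr_deriv (by ring)

end Gradient

section UnitCell

variable {d : ℕ}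

lemma Qcell_eq_preimage :
    Qcell d = WithLp.ofLp ⁻¹' Set.univ.pi fun _ : Fin d => Set.Ico (0 : ℝ) 1 := by
  ext x
  simp [Qcell]

lemma measurableSet_Qcell : MeasurableSet (Qcell d) := by
  rw [Qcell_eq_preimage]
  exact (PiLp.volume_preserving_ofLp (Fin d)).measurable
    (.univ_pi fun _ => measurableSet_Ico)

lemma isBounded_Qcell : Bornology.IsBounded (Qcell d) := by
  rw [Qcell_eq_preimage]
  exact (PiLp.antilipschitzWith_ofLp 2 _).isBounded_preimage
    (.pi fun _ => Metric.isBounded_Ico 0 1)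

lemma integrableOn_Qcell {f : Euc d → ℝ} (hf : Continuous f) : IntegrableOn f (Qcell d) :=
  integrableOn_of_continuous_of_isBounded hf isBounded_Qcell

lemma setIntegral_Qcell_eq_setIntegral_Icc {F : Type*} [NormedAddCommGroup F] [NormedSpace ℝ F]
    (f : Euc d → F) :
    ∫ x in Qcell d, f x = ∫ y in Set.Icc (0 : Fin d → ℝ) 1, f (WithLp.toLp 2 y) := by
  have hIco : (Set.univ.pi fun _ : Fin d => Set.Ico (0 : ℝ) 1) =ᵐ[volume]
      Set.Icc (0 : Fin d → ℝ) 1 := by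
    rw [volume_pi]
    exact Measure.univ_pi_Ico_ae_eq_Icc
  rw [← setIntegral_congr_set hIco,
    ← (PiLp.volume_preserving_ofLp (Fin d)).setIntegral_preimage_emb
      (MeasurableEquiv.toLp 2 (Fin d → ℝ)).symm.measurableEmbedding, ← Qcell_eq_preimage]

lemma toLp_insertNth_one {n : ℕ} (i : Fin (n + 1)) (y : Fin n → ℝ) :
    (WithLp.toLp 2 (i.insertNth 1 y) : Euc (n + 1)) =
      WithLp.toLp 2 (i.insertNth 0 y) + EuclideanSpace.single i 1 := by
  ext j
  refine Fin.succAboveCases i ?_ (fun k => ?_) j <;> simp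

lemma setIntegral_Qcell_divergence_eq_zero {F : Type*} [NormedAddCommGroup F] [NormedSpace ℝ F]
    {V : Fin d → Euc d → F} (hV : ∀ i, ContDiff ℝ 1 (V i))
    (hper : ∀ i, Periodic (V i) (EuclideanSpace.single i 1)) :
    ∫ x in Qcell d, ∑ i, fderiv ℝ (V i) x (EuclideanSpace.single i 1) = 0 := by
  rcases d with _ | n
  · simp
  let L := (PiLp.continuousLinearEquiv 2 ℝ fun _ : Fin (n + 1) => ℝ).symm
  have hcont : Continuous fun y =>
      ∑ i, (fderiv ℝ (V i) (L y) ∘L L.toContinuousLinearMap) (Pi.single i 1) :=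
    continuous_finsetSum _ fun i _ =>
      (((hV i).continuous_fderiv one_ne_zero).comp L.continuous).clm_apply continuous_const
  have hdiv := integral_divergence_of_hasFDerivAt_off_countable' (0 : Fin (n + 1) → ℝ) 1
    zero_le_one (fun i y => V i (L y))
    (fun i y => fderiv ℝ (V i) (L y) ∘L L.toContinuousLinearMap) ∅
    Set.countable_empty (fun i => ((hV i).continuous.comp L.continuous).continuousOn)
    (fun y _ i => ((hV i).differentiable one_ne_zero (L y)).hasFDerivAt.comp y L.hasFDerivAt)
    (hcont.continuousOn.integrableOn_compact isCompact_Icc)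
  have hfaces (i : Fin (n + 1)) (y : Fin n → ℝ) :
      V i (L (i.insertNth 1 y)) = V i (L (i.insertNth 0 y)) :=
    (congrArg (V i) (toLp_insertNth_one i y)).trans (hper i _)
  rw [setIntegral_Qcell_eq_setIntegral_Icc]
  refine hdiv.trans (Finset.sum_eq_zero fun i _ => sub_eq_zero.2 ?_)
  simp only [Pi.one_apply, Pi.zero_apply, hfaces]

end UnitCell

section Green

variable {d : ℕ}

lemma continuous_lap {g : Euc d → ℝ} (hg : ContDiff ℝ 2 g) : Continuous (lap g) :=
  continuous_finsetSum _ fun _ _ =>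
    ((contDiff_fderiv_apply hg _).continuous_fderiv one_ne_zero).clm_apply continuous_const

lemma setIntegral_Qcell_inner_gradient {f g : Euc d → ℝ} (hf : ContDiff ℝ 1 f)
    (hg : ContDiff ℝ 2 g) (hfper : ∀ i, Periodic f (EuclideanSpace.single i 1))
    (hgper : ∀ i, Periodic g (EuclideanSpace.single i 1)) :
    ∫ x in Qcell d, ⟪gradient f x, gradient g x⟫ = -∫ x in Qcell d, f x * lap g x := by
  have hdiv := setIntegral_Qcell_divergence_eq_zero
    (V := fun i y => f y * fderiv ℝ g y (EuclideanSpace.single i 1))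
    (fun i => hf.mul (contDiff_fderiv_apply hg _))
    (fun i => (hfper i).mul fun y => by rw [periodic_fderiv (hgper i)])
  have hprod (x : Euc d) :
      ∑ i, fderiv ℝ (fun y => f y * fderiv ℝ g y (EuclideanSpace.single i 1)) x
        (EuclideanSpace.single i 1) = ⟪gradient f x, gradient g x⟫ + f x * lap g x := by
    rw [inner_gradient_gradient, lap, Finset.mul_sum, ← Finset.sum_add_distrib]
    refine Finset.sum_congr rfl fun i _ => ?_
    rw [fderiv_fun_mul (hf.differentiable one_ne_zero x)
      ((contDiff_fderiv_apply hg _).differentiable one_ne_zero x)]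
    simp only [add_apply, smul_apply, smul_eq_mul]
    ring
  simp only [hprod] at hdiv
  have hinner : Continuous fun x => ⟪gradient f x, gradient g x⟫ :=
    (continuous_gradient hf).inner (continuous_gradient (hg.of_le one_le_two))
  have hmul : Continuous fun x => f x * lap g x := hf.continuous.mul (continuous_lap hg)
  rw [integral_add (integrableOn_Qcell hinner) (integrableOn_Qcell hmul)] at hdiv
  exact eq_neg_of_add_eq_zero_left hdiv

end Green

section Energies

variable {d : ℕ} {φ : Euc d → ℝ → ℝ}

lemma hasDerivAt_setIntegral_Qcell_norm_gradient_sq (hφ : ContDiff ℝ 2 (uncurry φ))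
    (hper : ∀ i, Periodic φ (EuclideanSpace.single i 1)) (t : ℝ) :
    HasDerivAt (fun s => ∫ x in Qcell d, ‖gradient (fun y => φ y s) x‖ ^ 2)
      (-2 * ∫ x in Qcell d, deriv (φ x) t * lap (fun y => φ y t) x) t := by
  have hφ₁ : ContDiff ℝ 1 (uncurry φ) := hφ.of_le one_le_two
  have hφt : ContDiff ℝ 1 (uncurry fun x s => deriv (φ x) s) :=
    contDiff_uncurry_deriv hφ one_add_one_eq_two.le
  have hderiv := hasDerivAt_setIntegral_of_isBounded (μ := volume) isBounded_Qcell
    measurableSet_Qcell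
    (fun s => (continuous_gradient (contDiff_slice hφ₁ s)).norm.pow 2)
    (continuous_const.mul
      ((continuous_uncurry_gradient hφt).inner (continuous_uncurry_gradient hφ₁)))
    (hasDerivAt_norm_gradient_sq hφ) t
  have hgreen := setIntegral_Qcell_inner_gradient (contDiff_slice hφt t) (contDiff_slice hφ t)
    (fun i x => by rw [hper i x]) (fun i x => by rw [hper i x])
  refine hderiv.congr_deriv ?_
  rw [neg_mul_comm, ← hgreen, ← integral_const_mul]

lemma hasDerivAt_W (s : ℝ) : HasDerivAt W (Wp s) s := by
  have h := ((((hasDerivAt_id' s).fun_pow 2).const_sub 1).fun_pow 2).div_const 2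
  exact h.congr_deriv (by simp only [Wp]; ring)

lemma continuous_W : Continuous W := by
  unfold W
  fun_prop

lemma continuous_Wp : Continuous Wp := by
  unfold Wp
  fun_prop

lemma continuous_sqrt_two_mul_W : Continuous fun s => √(2 * W s) :=
  (continuous_W.const_mul 2).sqrt

lemma hasDerivAt_kfun (s : ℝ) : HasDerivAt kfun (√(2 * W s)) s :=
  continuous_sqrt_two_mul_W.integral_hasStrictDerivAt 0 s |>.hasDerivAt

lemma Eeps_eq_add (hφ : ContDiff ℝ 1 (uncurry φ)) (ε α : ℝ) (lam : ℝ → ℝ) :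
    Eeps d ε α φ lam = fun t =>
      ε / 2 * (∫ x in Qcell d, ‖gradient (fun y => φ y t) x‖ ^ 2) +
        (∫ x in Qcell d, W (φ x t)) / ε + ε ^ α / 2 * lam t ^ 2 := by
  funext t
  have hslice : ContDiff ℝ 1 fun x => φ x t := contDiff_slice hφ t
  have hgrad : Continuous fun x => ε / 2 * ‖gradient (fun y => φ y t) x‖ ^ 2 :=
    ((continuous_gradient hslice).norm.pow 2).const_mul _
  have hW : Continuous fun x => W (φ x t) / ε := (continuous_W.comp hslice.continuous).div_const ε
  rw [← integral_const_mul, ← integral_div,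
    ← integral_add (integrableOn_Qcell hgrad) (integrableOn_Qcell hW)]
  simp only [Eeps, div_mul_eq_mul_div]

lemma mul_setIntegral_Qcell_deriv_sq (hφ : ContDiff ℝ 2 (uncurry φ)) {ε l t : ℝ}
    (hPDE : ∀ x, ε * deriv (φ x) t =
      ε * lap (fun y => φ y t) x - Wp (φ x t) / ε + l * √(2 * W (φ x t))) :
    ε * ∫ x in Qcell d, deriv (φ x) t ^ 2 =
      ε * (∫ x in Qcell d, deriv (φ x) t * lap (fun y => φ y t) x) -
        (∫ x in Qcell d, Wp (φ x t) * deriv (φ x) t) / ε +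
        l * ∫ x in Qcell d, √(2 * W (φ x t)) * deriv (φ x) t := by
  have hslice : Continuous fun x => φ x t := (contDiff_slice hφ t).continuous
  have hφt : Continuous fun x => deriv (φ x) t :=
    (contDiff_slice (contDiff_uncurry_deriv hφ one_add_one_eq_two.le) t).continuous
  have hlap : Continuous fun x => ε * (deriv (φ x) t * lap (fun y => φ y t) x) :=
    (hφt.mul (continuous_lap (contDiff_slice hφ t))).const_mul ε
  have hWp : Continuous fun x => Wp (φ x t) * deriv (φ x) t / ε :=
    ((continuous_Wp.comp hslice).mul hφt).div_const ε
  have hsqrt : Continuous fun x => l * (√(2 * W (φ x t)) * deriv (φ x) t) :=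
    ((continuous_sqrt_two_mul_W.comp hslice).mul hφt).const_mul l
  simp only [← integral_const_mul, ← integral_div]
  rw [← integral_sub (integrableOn_Qcell hlap) (integrableOn_Qcell hWp),
    ← integral_add (integrableOn_Qcell (hlap.fun_sub hWp)) (integrableOn_Qcell hsqrt)]
  congr 1 with x
  linear_combination deriv (φ x) t * hPDE x

lemma periodic_single_of_forall_int
    (hper : ∀ (x : Euc d) (z : Fin d → ℤ) (t : ℝ),
      φ (x + (WithLp.equiv 2 (Fin d → ℝ)).symm fun i => (z i : ℝ)) t = φ x t) (i : Fin d) :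
    Periodic φ (EuclideanSpace.single i 1) := by
  intro x
  have hsingle : (WithLp.equiv 2 (Fin d → ℝ)).symm
      (fun j => ((Pi.single i 1 : Fin d → ℤ) j : ℝ)) = EuclideanSpace.single i (1 : ℝ) := by
    ext j
    simp [Pi.single_apply]
  funext t
  rw [← hsingle, hper]

end Energies

theorem stmt0_general {d : ℕ} {ε : ℝ} (hε : 0 < ε) (α : ℝ) {φ : Euc d → ℝ → ℝ}
    (hφ : ContDiff ℝ 2 (uncurry φ)) (hper : ∀ i, Periodic φ (EuclideanSpace.single i 1))
    {lam : ℝ → ℝ}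
    (hlam : ∀ t, lam t = ε ^ (-α) *
      ((∫ x in Qcell d, kfun (φ x 0)) - ∫ x in Qcell d, kfun (φ x t)))
    {t : ℝ}
    (hPDE : ∀ x, ε * deriv (φ x) t =
      ε * lap (fun y => φ y t) x - Wp (φ x t) / ε + lam t * √(2 * W (φ x t))) :
    HasDerivAt (Eeps d ε α φ lam) (-ε * ∫ x in Qcell d, deriv (φ x) t ^ 2) t := by
  have hφ₁ : ContDiff ℝ 1 (uncurry φ) := hφ.of_le one_le_two
  have hgrad := hasDerivAt_setIntegral_Qcell_norm_gradient_sq hφ hper t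
  have hW := hasDerivAt_setIntegral_comp (μ := volume) isBounded_Qcell measurableSet_Qcell hφ₁
    hasDerivAt_W continuous_Wp t
  have hk := hasDerivAt_setIntegral_comp (μ := volume) isBounded_Qcell measurableSet_Qcell hφ₁
    hasDerivAt_kfun continuous_sqrt_two_mul_W t
  have hlam' := (hk.const_sub (∫ x in Qcell d, kfun (φ x 0))).const_mul (ε ^ (-α))
  rw [← funext hlam] at hlam'
  have hcancel : ε ^ α * ε ^ (-α) = 1 := by rw [← rpow_add hε, add_neg_cancel, rpow_zero]
  have htested := mul_setIntegral_Qcell_deriv_sq hφ hPDE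
  rw [Eeps_eq_add hφ₁]
  refine (((hgrad.const_mul (ε / 2)).add (hW.div_const ε)).add
    ((hlam'.fun_pow 2).const_mul (ε ^ α / 2))).congr_deriv ?_
  simp only [Nat.cast_ofNat, Nat.add_one_sub_one, pow_one]
  linear_combination htested -
    lam t * (∫ x in Qcell d, √(2 * W (φ x t)) * deriv (φ x) t) * hcancel

/-- energy dissipation identity for the nonlocal Allen–Cahn equation. -/
theorem stmt0 (d : ℕ) (hd : 2 ≤ d) (T ε α : ℝ) (hT : 0 < T) (hε : 0 < ε)
    (hα : α ∈ Set.Ioo (0:ℝ) 1)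
    (φ : Euc d → ℝ → ℝ)
    (hφ : ContDiff ℝ (⊤ : ℕ∞) (Function.uncurry φ))
    (hper : ∀ (x : Euc d) (z : Fin d → ℤ) (t : ℝ), φ (x + (WithLp.equiv 2 (Fin d → ℝ)).symm fun i => (z i : ℝ)) t = φ x t)
    (lam : ℝ → ℝ)
    (hlam : ∀ t, lam t = ε ^ (-α) *
      ((∫ x in Qcell d, kfun (φ x 0)) - (∫ x in Qcell d, kfun (φ x t))))
    (hPDE : ∀ (x : Euc d), ∀ t ∈ Set.Ioo (0:ℝ) T,
      ε * deriv (φ x) t =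
        ε * lap (fun y => φ y t) x - Wp (φ x t) / ε + lam t * Real.sqrt (2 * W (φ x t))) :
    ∀ t ∈ Set.Ioo (0:ℝ) T,
      HasDerivAt (Eeps d ε α φ lam)
        (-ε * ∫ x in Qcell d, (deriv (φ x) t) ^ 2) t := by
  exact fun t ht => stmt0_general hε α (hφ.of_le (WithTop.coe_le_coe.2 le_top))
    (periodic_single_of_forall_int hper) hlam fun x => hPDE x t ht
end
end

section
/- Hyperplane test lemma (uniqueness of the normal velocity in the smooth setting): let d ≥ 2, let P ⊂ ℝ^d be a (d−1)-dimensional linear subspace, and let w ∈ ℝ^d be orthogonal to P. If ∫_P ∇φ(x) · w dH^{d−1}(x) ≥ 0 for every nonnegative φ ∈ C¹_c(ℝ^d), then w = 0. -/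
open MeasureTheory Real Function
open scoped RealInnerProductSpace

noncomputable section

/-!
If `w ≠ 0`, centre a smooth radially decreasing bump at `-w`, with support reaching past the origin.
At a point `x ∈ P` its gradient is a nonpositive multiple of `x + w`, and `⟪x + w, w⟫ = ‖w‖ ^ 2`
because `w ⊥ P`. So on `P` the derivative in direction `w` is nowhere positive, and it is negative
at the origin; its integral over `P` is therefore negative.
-/

open scoped ContDiff

section Hausdorff

variable {X F : Type*} [EMetricSpace X] [MeasurableSpace X] [BorelSpace X]
  [NormedAddCommGroup F] [NormedSpace ℝ F]

lemma setIntegral_hausdorffMeasure_eq_integral_subtype {s : Set X} (hs : MeasurableSet s)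
    {k : ℝ} (hk : 0 ≤ k) (f : X → F) :
    ∫ x in s, f x ∂μH[k] = ∫ x : s, f x ∂μH[k] := by
  have map_coe : Measure.map ((↑) : s → X) μH[k] = μH[k].restrict s := by
    rw [isometry_subtype_coe.map_hausdorffMeasure (.inl hk), Subtype.range_coe]
  rw [← map_coe, (MeasurableEmbedding.subtype_coe hs).integral_map]

end Hausdorff

lemma hasDerivAt_expNegInvGlue (t : ℝ) :
    HasDerivAt expNegInvGlue (t⁻¹ ^ 2 * expNegInvGlue t) t := by
  simpa using expNegInvGlue.hasDerivAt_polynomial_eval_inv_mul 1 t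

section RadialBump

variable {E : Type*} [NormedAddCommGroup E]

/-- The radially decreasing bump `x ↦ exp (-1 / (r ^ 2 - ‖x - c‖ ^ 2))` of radius `|r|` around `c`,
extended by zero; it provides the test functions. -/
def radialBump (c : E) (r : ℝ) (x : E) : ℝ :=
  expNegInvGlue (r ^ 2 - ‖x - c‖ ^ 2)

lemma radialBump_nonneg (c : E) (r : ℝ) (x : E) : 0 ≤ radialBump c r x :=
  expNegInvGlue.nonneg _

lemma hasCompactSupport_radialBump [ProperSpace E] (c : E) (r : ℝ) :
    HasCompactSupport (radialBump c r) := by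
  refine .intro (isCompact_closedBall c |r|) fun x hx ↦ expNegInvGlue.zero_of_nonpos ?_
  rw [mem_closedBall_iff_norm, not_le] at hx
  exact sub_nonpos.2 (sq_le_sq.2 (hx.le.trans (le_abs_self _)))

variable [InnerProductSpace ℝ E]

lemma contDiff_radialBump {n : ℕ∞} (c : E) (r : ℝ) : ContDiff ℝ n (radialBump c r) :=
  expNegInvGlue.contDiff.comp (contDiff_const.sub ((contDiff_id.sub contDiff_const).norm_sq ℝ))

lemma fderiv_radialBump_apply (c : E) (r : ℝ) (x v : E) :
    fderiv ℝ (radialBump c r) x v =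
      -(2 * ((r ^ 2 - ‖x - c‖ ^ 2)⁻¹ ^ 2 * radialBump c r x) * ⟪x - c, v⟫) := by
  have hasFDerivAt_profile :
      HasFDerivAt (fun y ↦ r ^ 2 - ‖y - c‖ ^ 2) (-(2 • innerSL ℝ (x - c))) x :=
    ((hasFDerivAt_id x).sub_const c).norm_sq.const_sub (r ^ 2)
  have hasFDerivAt_bump : HasFDerivAt (radialBump c r)
      (((r ^ 2 - ‖x - c‖ ^ 2)⁻¹ ^ 2 * radialBump c r x) •
        (-(2 • innerSL ℝ (x - c)) : E →L[ℝ] ℝ)) x :=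
    (hasDerivAt_expNegInvGlue _).comp_hasFDerivAt x hasFDerivAt_profile
  rw [hasFDerivAt_bump.fderiv]
  simp only [smul_apply, neg_apply, innerSL_apply_apply, smul_eq_mul, nsmul_eq_mul,
    Nat.cast_ofNat]
  ring

variable {P : Submodule ℝ E} {w : E}

lemma fderiv_radialBump_apply_of_mem_orthogonal (hw : w ∈ Pᗮ) (r : ℝ) (x : P) :
    fderiv ℝ (radialBump (-w) r) x w =
      -(2 * ((r ^ 2 - ‖(x : E) + w‖ ^ 2)⁻¹ ^ 2 * radialBump (-w) r x) * ‖w‖ ^ 2) := by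
  have hxw : ⟪(x : E), w⟫ = 0 := hw x x.2
  rw [fderiv_radialBump_apply, sub_neg_eq_add, inner_add_left, hxw, zero_add,
    real_inner_self_eq_norm_sq]

lemma fderiv_radialBump_apply_nonpos_of_mem_orthogonal (hw : w ∈ Pᗮ) (r : ℝ) (x : P) :
    fderiv ℝ (radialBump (-w) r) x w ≤ 0 := by
  rw [fderiv_radialBump_apply_of_mem_orthogonal hw, neg_nonpos]
  have := radialBump_nonneg (-w) r (x : E)
  positivity

lemma fderiv_radialBump_zero_apply_neg (hw₀ : w ≠ 0) {r : ℝ} (hr : ‖w‖ < r) :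
    fderiv ℝ (radialBump (-w) r) 0 w < 0 := by
  have gap_pos : 0 < r ^ 2 - ‖w‖ ^ 2 := sub_pos.2 (by gcongr)
  have bump_pos : 0 < radialBump (-w) r 0 := expNegInvGlue.pos_of_pos (by simpa using gap_pos)
  rw [fderiv_radialBump_apply, zero_sub, neg_neg, real_inner_self_eq_norm_sq, neg_lt_zero]
  positivity

lemma integral_fderiv_radialBump_apply_neg [FiniteDimensional ℝ E]
    [MeasurableSpace E] [OpensMeasurableSpace E] (ν : Measure P) [IsFiniteMeasureOnCompacts ν]
    [ν.IsOpenPosMeasure] (hw : w ∈ Pᗮ) (hw₀ : w ≠ 0) {r : ℝ} (hr : ‖w‖ < r) :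
    ∫ x : P, fderiv ℝ (radialBump (-w) r) x w ∂ν < 0 := by
  have continuous_deriv : Continuous fun x : P ↦ fderiv ℝ (radialBump (-w) r) x w :=
    (((contDiff_radialBump (n := 1) (-w) r).continuous_fderiv one_ne_zero).clm_apply
      continuous_const).comp continuous_subtype_val
  have compactSupport_deriv :
      HasCompactSupport fun x : P ↦ fderiv ℝ (radialBump (-w) r) x w :=
    ((hasCompactSupport_radialBump (-w) r).fderiv_apply ℝ w).comp_isClosedEmbedding
      P.closed_of_finiteDimensional.isClosedEmbedding_subtypeVal
  rw [← neg_pos, ← integral_neg]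
  exact continuous_deriv.neg.integral_pos_of_hasCompactSupport_nonneg_nonzero (x := 0)
    compactSupport_deriv.neg
    (fun x ↦ neg_nonneg.2 (fderiv_radialBump_apply_nonpos_of_mem_orthogonal hw r x))
    (neg_ne_zero.2 (fderiv_radialBump_zero_apply_neg hw₀ hr).ne)

end RadialBump

theorem stmt9_general {E : Type*} [NormedAddCommGroup E] [InnerProductSpace ℝ E]
    [FiniteDimensional ℝ E] [MeasurableSpace E] [BorelSpace E] {P : Submodule ℝ E} {w : E}
    (hw : w ∈ Pᗮ)
    (h : ∀ φ : E → ℝ, ContDiff ℝ ∞ φ → HasCompactSupport φ → (∀ x, 0 ≤ φ x) →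
      0 ≤ ∫ x in (P : Set E), ⟪gradient φ x, w⟫ ∂μH[Module.finrank ℝ P]) :
    w = 0 := by
  by_contra hw₀
  have radius_gt : ‖w‖ < 2 * ‖w‖ := lt_two_mul_self (norm_pos_iff.2 hw₀)
  have test_nonneg := h (radialBump (-w) (2 * ‖w‖)) (contDiff_radialBump _ _)
    (hasCompactSupport_radialBump _ _) (radialBump_nonneg _ _)
  simp only [inner_gradient_left] at test_nonneg
  rw [setIntegral_hausdorffMeasure_eq_integral_subtype
    P.closed_of_finiteDimensional.measurableSet (Nat.cast_nonneg _)] at test_nonneg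
  exact test_nonneg.not_gt (integral_fderiv_radialBump_apply_neg _ hw hw₀ radius_gt)

/-- hyperplane test lemma (uniqueness of the normal velocity in the
smooth setting). If `P ⊂ ℝ^d` is a `(d-1)`-dimensional linear subspace, `w ⊥ P`,
and `∫_P ∇φ · w dH^{d-1} ≥ 0` for every nonnegative `φ ∈ C¹_c(ℝ^d)`, then `w = 0`. -/
theorem stmt9 (d : ℕ) (hd : 2 ≤ d) (P : Submodule ℝ (Euc d))
    (hP : Module.finrank ℝ P = d - 1) (w : Euc d) (hw : w ∈ Pᗮ)
    (h : ∀ φ : Euc d → ℝ, ContDiff ℝ 1 φ → HasCompactSupport φ → (∀ x, 0 ≤ φ x) →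
      0 ≤ ∫ x in (P : Set (Euc d)), ⟪gradient φ x, w⟫ ∂(μH[((d : ℝ) - 1)])) :
    w = 0 := by
  have dim_eq : (d : ℝ) - 1 = Module.finrank ℝ P := by rw [hP, Nat.cast_pred (by lia)]
  exact stmt9_general hw fun φ hφ hc h₀ ↦ dim_eq ▸ h φ (hφ.of_le (by simp)) hc h₀
end
end
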